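/- Suppose dim W = 7 and that dim(W ∩ (v∧V₅)) ≤ 2 for every nonzero v ∈ V₅. Then for every nonzero v ∈ V₅, one has dim(A(W,q) ∩ F_v) ≥ 3 if and only if dim(W ∩ (v∧V₅)) = 2 and q(a,b) = 0 for all a, b ∈ W ∩ (v∧V₅); moreover, when these equivalent conditions hold, dim(A(W,q) ∩ F_v) = 3. -/

import Mathlib

open ExteriorAlgebra Module

noncomputable section

namespace EPW

variable (V : Type) [AddCommGroup V] [Module ℂ V]

/-- A volume form `vol : ⋀ᵏV → ℂ` extended to the whole exterior algebra by composing with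
the projection onto the degree-`k` graded component; on `⋀ᵏV` it agrees with `vol`. -/
def volC (k : ℕ) (vol : ⋀[ℂ]^k V →ₗ[ℂ] ℂ) : ExteriorAlgebra ℂ V →ₗ[ℂ] ℂ :=
  vol ∘ₗ (DirectSum.component ℂ ℕ (fun i => ↥(⋀[ℂ]^i V)) k) ∘ₗ
    (DirectSum.decomposeLinearEquiv (fun i : ℕ => ⋀[ℂ]^i V)).toLinearMap

/-- `F_v = v ∧ ⋀²V₆ = {v ∧ η : η ∈ ⋀²V₆}`. -/
def Fv (v : V) : Submodule ℂ (ExteriorAlgebra ℂ V) :=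
  Submodule.map (LinearMap.mulLeft ℂ (ExteriorAlgebra.ι ℂ v)) (⋀[ℂ]^2 V)

/-- The image of `⋀ᵏW` inside the exterior algebra of `V`, for a subspace `W ⊆ V`. -/
def extPow (W : Submodule ℂ V) (k : ℕ) : Submodule ℂ (ExteriorAlgebra ℂ V) :=
  (Submodule.map (ExteriorAlgebra.ι ℂ) W) ^ k

/-- `v ∧ W = {v ∧ u : u ∈ W}` for a subspace `W ⊆ V`. -/
def vWedge (v : V) (W : Submodule ℂ V) : Submodule ℂ (ExteriorAlgebra ℂ V) :=
  Submodule.map (LinearMap.mulLeft ℂ (ExteriorAlgebra.ι ℂ v))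
    (Submodule.map (ExteriorAlgebra.ι ℂ) W)

/-- The Lagrangian subspace `A(W,q)` associated to a subspace `W ⊆ ⋀²V₅` and a bilinear
form `q` on `W`:  `A(W,q) = {η + x∧w : w ∈ W, η ∈ ⋀³V₅, vol(x∧η∧w') = -q(w,w') ∀ w' ∈ W}`. -/
def AWq (vol : ⋀[ℂ]^6 V →ₗ[ℂ] ℂ) (x : V) (V₅ : Submodule ℂ V)
    (W : Submodule ℂ (ExteriorAlgebra ℂ V)) (q : W →ₗ[ℂ] W →ₗ[ℂ] ℂ) :
    Submodule ℂ (ExteriorAlgebra ℂ V) where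
  carrier := {z | ∃ w : W, ∃ η ∈ extPow V V₅ 3,
    z = η + ExteriorAlgebra.ι ℂ x * (w : ExteriorAlgebra ℂ V) ∧
    ∀ w' : W, volC V 6 vol (ExteriorAlgebra.ι ℂ x * η * (w' : ExteriorAlgebra ℂ V)) = - q w w'}
  add_mem' := by
    rintro a b ⟨w, η, hη, rfl, hc⟩ ⟨w', η', hη', rfl, hc'⟩
    refine ⟨w + w', η + η', add_mem hη hη', ?_, ?_⟩
    · rw [Submodule.coe_add, mul_add]
      abel
    · intro w₀
      have h1 : ExteriorAlgebra.ι ℂ x * (η + η') * (w₀ : ExteriorAlgebra ℂ V)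
          = ExteriorAlgebra.ι ℂ x * η * (w₀ : ExteriorAlgebra ℂ V)
            + ExteriorAlgebra.ι ℂ x * η' * (w₀ : ExteriorAlgebra ℂ V) := by
        rw [mul_add, add_mul]
      rw [h1, map_add, hc w₀, hc' w₀, map_add, LinearMap.add_apply]
      ring
  zero_mem' := by
    refine ⟨0, 0, zero_mem _, by simp, ?_⟩
    intro w'
    simp
  smul_mem' := by
    rintro c a ⟨w, η, hη, rfl, hc⟩
    refine ⟨c • w, c • η, Submodule.smul_mem _ c hη, ?_, ?_⟩
    · rw [Submodule.coe_smul, smul_add, mul_smul_comm]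
    · intro w₀
      have h1 : ExteriorAlgebra.ι ℂ x * (c • η) * (w₀ : ExteriorAlgebra ℂ V)
          = c • (ExteriorAlgebra.ι ℂ x * η * (w₀ : ExteriorAlgebra ℂ V)) := by
        rw [mul_smul_comm, smul_mul_assoc]
      rw [h1, map_smul, hc w₀, map_smul, LinearMap.smul_apply, smul_eq_mul, smul_eq_mul]
      ring

end EPW

/-!
Let `ξ` be the linear form with `ξ x = 1` and kernel `V₅`. Contraction with `ξ` sends `η + x ∧ w`
to `w`, and by exactness of the Koszul complex `F_v` is the kernel of `v ∧ -` on `⋀³V₆`. Write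
`K = W ∩ (v ∧ V₅)`. An element `η + x ∧ w` of `A(W,q)` lies in `F_v` if and only if `w ∈ K` and
`v ∧ η = 0`, and the latter means that `η` is orthogonal to `v ∧ V₅` under the perfect pairing
`(η, w) ↦ vol(x ∧ η ∧ w)` between `⋀³V₅` and `⋀²V₅`. Hence the image of `A(W,q) ∩ F_v` under the
contraction is the radical of `q|_K`, its kernel is the annihilator of `W + v ∧ V₅` in `⋀³V₅`, and
rank-nullity gives
`dim (A(W,q) ∩ F_v) = (10 - (dim W + 4 - dim K)) + dim rad (q|_K)`,
where `dim rad (q|_K) ≤ dim K` with equality if and only if `q` vanishes on `K`.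
-/

namespace EPW

section Contraction

variable {R M : Type*} [CommRing R] [AddCommGroup M] [Module R M] {N : Submodule R M} {k : ℕ}

/-- The interior product `z ↦ d ⌟ z` on the exterior algebra: the contraction of
`CliffordAlgebra` for the zero quadratic form. -/
def contract (d : Dual R M) : ExteriorAlgebra R M →ₗ[R] ExteriorAlgebra R M :=
  CliffordAlgebra.contractLeft (Q := (0 : QuadraticForm R M)) d

lemma contract_ι_mul (d : Dual R M) (u : M) (z : ExteriorAlgebra R M) :
    contract d (ι R u * z) = d u • z - ι R u * contract d z :=
  CliffordAlgebra.contractLeft_ι_mul _ u z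

lemma contract_algebraMap (d : Dual R M) (r : R) : contract d (algebraMap R _ r) = 0 :=
  CliffordAlgebra.contractLeft_algebraMap _ d r

lemma map_ι_pow_succ_le_iff {P : Submodule R (ExteriorAlgebra R M)} :
    N.map (ι R) ^ (k + 1) ≤ P ↔ ∀ u ∈ N, ∀ z ∈ N.map (ι R) ^ k, ι R u * z ∈ P := by
  simp only [pow_succ', Submodule.mul_le, Submodule.mem_map, forall_exists_index, and_imp,
    forall_apply_eq_imp_iff₂]

lemma ι_mul_mem {u : M} (hu : u ∈ N) {z : ExteriorAlgebra R M} (hz : z ∈ N.map (ι R) ^ k) :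
    ι R u * z ∈ N.map (ι R) ^ (k + 1) :=
  map_ι_pow_succ_le_iff.1 le_rfl u hu z hz

lemma ι_mul_mem_exteriorPower (u : M) {z : ExteriorAlgebra R M} (hz : z ∈ ⋀[R]^k M) :
    ι R u * z ∈ ⋀[R]^(k + 1) M := by
  rw [exteriorPower, pow_succ']
  exact Submodule.mul_mem_mul ⟨u, rfl⟩ hz

lemma contract_mem (d : Dual R M) {z : ExteriorAlgebra R M} (hz : z ∈ N.map (ι R) ^ (k + 1)) :
    contract d z ∈ N.map (ι R) ^ k := by
  suffices h : N.map (ι R) ^ (k + 1) ≤ (N.map (ι R) ^ k).comap (contract d) from h hz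
  clear hz
  induction k with
  | zero =>
    refine map_ι_pow_succ_le_iff.2 fun u _ z hz => ?_
    obtain ⟨r, rfl⟩ := Submodule.mem_one.1 (by rwa [pow_zero] at hz)
    rw [Submodule.mem_comap, contract_ι_mul, contract_algebraMap, mul_zero, sub_zero]
    exact Submodule.smul_mem _ _ hz
  | succ k ih =>
    refine map_ι_pow_succ_le_iff.2 fun u hu z hz => ?_
    rw [Submodule.mem_comap, contract_ι_mul]
    exact sub_mem (Submodule.smul_mem _ _ hz) (ι_mul_mem hu (ih hz))

lemma contract_eq_zero {d : Dual R M} (hd : ∀ u ∈ N, d u = 0) {z : ExteriorAlgebra R M}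
    (hz : z ∈ N.map (ι R) ^ k) : contract d z = 0 := by
  suffices h : N.map (ι R) ^ k ≤ LinearMap.ker (contract d) from h hz
  clear hz
  induction k with
  | zero =>
    rw [pow_zero, Submodule.one_le, ← map_one (algebraMap R _)]
    exact contract_algebraMap d 1
  | succ k ih =>
    refine map_ι_pow_succ_le_iff.2 fun u hu z hz => ?_
    rw [LinearMap.mem_ker, contract_ι_mul, hd u hu, ih hz, zero_smul, mul_zero, sub_zero]

lemma eq_ι_mul_contract {d : Dual R M} {v : M} (hv : d v = 1) {z : ExteriorAlgebra R M}
    (hz : ι R v * z = 0) : z = ι R v * contract d z := by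
  have h := contract_ι_mul d v z
  rwa [hz, map_zero, hv, one_smul, eq_comm, sub_eq_zero] at h

lemma ι_mul_ι_mul_self (v : M) (z : ExteriorAlgebra R M) : ι R v * (ι R v * z) = 0 := by
  rw [← mul_assoc, ι_sq_zero, zero_mul]

lemma ι_mul_ι_mul_swap (u v : M) (z : ExteriorAlgebra R M) :
    ι R u * (ι R v * z) = -(ι R v * (ι R u * z)) := by
  rw [← mul_assoc, eq_neg_of_add_eq_zero_left (ι_add_mul_swap u v), neg_mul, mul_assoc]

lemma contract_add_ι_mul {d : Dual R M} {x : M} (hx : d x = 1) {a b : ExteriorAlgebra R M}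
    (ha : contract d a = 0) (hb : contract d b = 0) : contract d (a + ι R x * b) = b := by
  rw [map_add, contract_ι_mul, ha, hb, hx, one_smul, mul_zero, sub_zero, zero_add]

lemma add_ι_mul_eq_zero_iff {d : Dual R M} {x : M} (hx : d x = 1) {a b : ExteriorAlgebra R M}
    (ha : contract d a = 0) (hb : contract d b = 0) : a + ι R x * b = 0 ↔ a = 0 ∧ b = 0 := by
  refine ⟨fun h => ?_, by rintro ⟨rfl, rfl⟩; simp⟩
  have hb0 : b = 0 := by
    rw [← contract_add_ι_mul hx ha hb, h, map_zero]
  exact ⟨by simpa only [hb0, mul_zero, add_zero] using h, hb0⟩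

lemma involute_mul_ι (z : ExteriorAlgebra R M) (u : M) :
    CliffordAlgebra.involute z * ι R u = ι R u * z := by
  induction z using ExteriorAlgebra.induction with
  | algebraMap r => rw [AlgHom.commutes, Algebra.commutes]
  | ι v =>
    rw [CliffordAlgebra.involute_ι, neg_mul, eq_comm]
    exact eq_neg_of_add_eq_zero_left (ι_add_mul_swap u v)
  | mul a b ha hb => rw [map_mul, mul_assoc, hb, ← mul_assoc, ha, mul_assoc]
  | add a b ha hb => rw [map_add, add_mul, ha, hb, mul_add]

lemma mul_ι_eq_zero_iff {z : ExteriorAlgebra R M} {u : M} : z * ι R u = 0 ↔ ι R u * z = 0 := by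
  rw [← involute_mul_ι, ← map_eq_zero_iff _ CliffordAlgebra.involute_involutive.injective,
    map_mul, CliffordAlgebra.involute_ι, mul_neg, neg_eq_zero]

end Contraction

section LinearAlgebra

variable {K E F : Type*} [Field K] [AddCommGroup E] [Module K E] [AddCommGroup F] [Module K F]

lemma finrank_map_add_finrank_inf_ker (f : E →ₗ[K] F) (U : Submodule K E) [FiniteDimensional K U] :
    finrank K (U.map f) + finrank K (U ⊓ LinearMap.ker f : Submodule K E) = finrank K U := by
  rw [← LinearMap.finrank_range_add_finrank_ker (f.domRestrict U), LinearMap.range_domRestrict,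
    LinearMap.ker_domRestrict, ← Submodule.map_comap_subtype, Submodule.finrank_map_subtype_eq]

lemma finrank_ker_domRestrict₁₂_self_eq_iff (B : E →ₗ[K] E →ₗ[K] K) (U : Submodule K E)
    [FiniteDimensional K U] :
    finrank K (LinearMap.ker (B.domRestrict₁₂ U U)) = finrank K U ↔
      ∀ a ∈ U, ∀ b ∈ U, B a b = 0 := by
  have htop : finrank K (LinearMap.ker (B.domRestrict₁₂ U U)) = finrank K U ↔
      LinearMap.ker (B.domRestrict₁₂ U U) = ⊤ :=
    ⟨Submodule.eq_top_of_finrank_eq, fun h => h ▸ finrank_top K U⟩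
  rw [htop, LinearMap.ker_eq_top, LinearMap.ext_iff₂]
  exact ⟨fun h a ha b hb => h ⟨a, ha⟩ ⟨b, hb⟩, fun h a b => h a a.2 b b.2⟩

lemma finrank_le_finrank_inf_ker_add_one (d : Dual K E) (U : Submodule K E)
    [FiniteDimensional K U] :
    finrank K U ≤ finrank K (U ⊓ LinearMap.ker d : Submodule K E) + 1 := by
  have hle : finrank K (U.map d) ≤ 1 := by simpa using (U.map d).finrank_le
  rw [← finrank_map_add_finrank_inf_ker d U]
  lia

lemma exists_dual_eq_one_of_notMem {U : Submodule K E} {x : E} (hx : x ∉ U) :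
    ∃ d : Dual K E, d x = 1 ∧ ∀ u ∈ U, d u = 0 := by
  obtain ⟨f, hfx, hf⟩ := U.exists_le_ker_of_notMem hx
  exact ⟨(f x)⁻¹ • f, by simp [hfx], fun u hu => by simp [LinearMap.mem_ker.1 (hf hu)]⟩

lemma exists_dual_eq_one_of_finrank_pos {U : Submodule K E} (hU : 0 < finrank K U) :
    ∃ d : Dual K E, ∃ u ∈ U, d u = 1 := by
  have := Module.nontrivial_of_finrank_pos hU
  obtain ⟨u, hu, hu0⟩ := U.exists_mem_ne_zero_of_ne_bot (U.nontrivial_iff_ne_bot.1 this)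
  obtain ⟨d, hd⟩ := Projective.exists_dual_eq_one K hu0
  exact ⟨d, u, hu, hd⟩

lemma exists_dual_eq_on_and_eq_zero_on {U W : Submodule K E} (f : Dual K W)
    (hf : ∀ w : W, (w : E) ∈ U → f w = 0) :
    ∃ g : Dual K E, (∀ w : W, g w = f w) ∧ ∀ u ∈ U, g u = 0 := by
  have hmem : f ∈ LinearMap.range (U.mkQ ∘ₗ W.subtype).dualMap := by
    rw [LinearMap.range_dualMap_eq_dualAnnihilator_ker, Submodule.mem_dualAnnihilator]
    exact fun w hw => hf w (by simpa using hw)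
  obtain ⟨g, rfl⟩ := hmem
  exact ⟨g ∘ₗ U.mkQ, fun w => rfl, fun u hu => by simp [(Submodule.Quotient.mk_eq_zero U).2 hu]⟩

variable {B : E →ₗ[K] F →ₗ[K] K} {P : Submodule K E} {Q R : Submodule K F}
  [FiniteDimensional K P] [FiniteDimensional K Q]

lemma domRestrict₁₂_surjective (hPQ : finrank K P = finrank K Q)
    (hB : ∀ p ∈ P, (∀ y ∈ Q, B p y = 0) → p = 0) (hR : R ≤ Q) :
    Function.Surjective (B.domRestrict₁₂ P R) := by
  have hinj : Function.Injective (B.domRestrict₁₂ P Q) := by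
    rw [injective_iff_map_eq_zero]
    intro p hp
    exact Subtype.ext (hB p p.2 fun y hy => LinearMap.congr_fun hp ⟨y, hy⟩)
  have hsurj : Function.Surjective (B.domRestrict₁₂ P Q) :=
    (LinearMap.injective_iff_surjective_of_finrank_eq_finrank
      (hPQ.trans Subspace.dual_finrank_eq.symm)).1 hinj
  exact (LinearMap.dualMap_surjective_of_injective (Submodule.inclusion_injective hR)).comp hsurj

end LinearAlgebra

section Field

variable {K M : Type*} [Field K] [AddCommGroup M] [Module K M] {N : Submodule K M} {k : ℕ}

lemma ι_mul_eq_zero_iff_mem_map {v : M} (hv0 : v ≠ 0) {z : ExteriorAlgebra K M}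
    (hz : z ∈ N.map (ι K) ^ (k + 1)) :
    ι K v * z = 0 ↔ z ∈ (N.map (ι K) ^ k).map (LinearMap.mulLeft K (ι K v)) := by
  constructor
  · intro h
    obtain ⟨d, hd⟩ := Projective.exists_dual_eq_one K hv0
    exact ⟨contract d z, contract_mem d hz, (eq_ι_mul_contract hd h).symm⟩
  · rintro ⟨y, -, rfl⟩
    exact ι_mul_ι_mul_self v y

lemma eq_zero_of_forall_ι_mul_eq_zero {U : Submodule K M} (hk : k < finrank K U)
    {z : ExteriorAlgebra K M} (hz : z ∈ N.map (ι K) ^ k) (h : ∀ u ∈ U, ι K u * z = 0) :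
    z = 0 := by
  induction k generalizing U z with
  | zero =>
    obtain ⟨d, u, hu, hd⟩ := exists_dual_eq_one_of_finrank_pos hk
    obtain ⟨r, rfl⟩ := Submodule.mem_one.1 (by rwa [pow_zero] at hz)
    rw [eq_ι_mul_contract hd (h u hu), contract_algebraMap, mul_zero]
  | succ k ih =>
    -- `u` with `d u = 1` divides `z`, and the quotient `d ⌟ z` is killed by `U ∩ ker d`.
    have := FiniteDimensional.of_finrank_pos (Nat.zero_lt_of_lt hk)
    obtain ⟨d, u, hu, hd⟩ := exists_dual_eq_one_of_finrank_pos (Nat.zero_lt_of_lt hk)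
    have hdz : contract d z = 0 := by
      have hker := finrank_le_finrank_inf_ker_add_one d U
      refine ih (U := U ⊓ LinearMap.ker d) (by lia) (contract_mem d hz) ?_
      rintro a ⟨ha, had⟩
      have had0 : d a = 0 := had
      have hcontract := contract_ι_mul d a z
      rwa [h a ha, had0, map_zero, zero_smul, zero_sub, zero_eq_neg] at hcontract
    rw [eq_ι_mul_contract hd (h u hu), hdz, mul_zero]

lemma eq_zero_of_forall_mul_eq_zero {j : ℕ} (hkj : k + j ≤ finrank K N)
    {z : ExteriorAlgebra K M} (hz : z ∈ N.map (ι K) ^ k)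
    (h : ∀ w ∈ N.map (ι K) ^ j, z * w = 0) : z = 0 := by
  induction j generalizing k z with
  | zero => simpa only [mul_one] using h 1 (by rw [pow_zero]; exact Submodule.one_le.1 le_rfl)
  | succ j ih =>
    refine eq_zero_of_forall_ι_mul_eq_zero (U := N) (by lia) hz fun u hu => mul_ι_eq_zero_iff.1 ?_
    have hzu : z * ι K u ∈ N.map (ι K) ^ (k + 1) := by
      rw [pow_succ]
      exact Submodule.mul_mem_mul hz ⟨u, hu, rfl⟩
    exact ih (by lia) hzu fun w hw => by rw [mul_assoc, h _ (ι_mul_mem hu hw)]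

lemma finrank_map_ι_pow [FiniteDimensional K N] (k : ℕ) :
    finrank K (N.map (ι K) ^ k : Submodule K (ExteriorAlgebra K M)) = (finrank K N).choose k := by
  have hpow : N.map (ι K) ^ k = (⋀[K]^k N).map (ExteriorAlgebra.map N.subtype).toLinearMap := by
    rw [Submodule.map_pow, ← LinearMap.range_comp, map_comp_ι, LinearMap.range_comp,
      Submodule.range_subtype]
  have hinj : Function.Injective (ExteriorAlgebra.map N.subtype).toLinearMap :=
    map_injective_field N.ker_subtype
  rw [hpow, ← (Submodule.equivMapOfInjective _ hinj _).finrank_eq, exteriorPower.finrank_eq]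

lemma finrank_map_mulLeft_ι_add_one [FiniteDimensional K N] {v : M} (hv : v ∈ N) (hv0 : v ≠ 0) :
    finrank K ((N.map (ι K)).map (LinearMap.mulLeft K (ι K v))) + 1 = finrank K N := by
  have hker : N.map (ι K) ⊓ LinearMap.ker (LinearMap.mulLeft K (ι K v)) = K ∙ ι K v := by
    refine le_antisymm ?_ ?_
    · rintro z ⟨hz, hvz⟩
      rw [SetLike.mem_coe, ← pow_one (N.map (ι K))] at hz
      simpa [Submodule.one_eq_span, Submodule.map_span] using
        (ι_mul_eq_zero_iff_mem_map hv0 hz).1 hvz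
    · rw [Submodule.span_singleton_le_iff_mem]
      exact ⟨⟨v, hv, rfl⟩, ι_sq_zero v⟩
  have hι : finrank K (N.map (ι K)) = finrank K N :=
    (Submodule.equivMapOfInjective _ (ι_leftInverse (R := K)).injective N).finrank_eq.symm
  have hι0 : ι K v ≠ 0 := (ι_eq_zero_iff v).not.2 hv0
  rw [← hι, ← finrank_map_add_finrank_inf_ker (LinearMap.mulLeft K (ι K v)) (N.map (ι K)), hker,
    finrank_span_singleton hι0]

end Field

section AWq

variable {V : Type} [AddCommGroup V] [Module ℂ V] {V₅ : Submodule ℂ V} {x v : V}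

lemma extPow_le_exteriorPower (N : Submodule ℂ V) (k : ℕ) : extPow V N k ≤ ⋀[ℂ]^k V :=
  pow_le_pow_left' LinearMap.map_le_range k

lemma eq_zero_of_volC_eq_zero {n : ℕ} {vol : ⋀[ℂ]^n V →ₗ[ℂ] ℂ} (hvol : Function.Injective vol)
    {z : ExteriorAlgebra ℂ V} (hz : z ∈ ⋀[ℂ]^n V) (h : volC V n vol z = 0) : z = 0 := by
  have hvolC : volC V n vol z = vol ⟨z, hz⟩ :=
    congrArg vol (Subtype.ext (DirectSum.decompose_of_mem_same (fun i => ⋀[ℂ]^i V) hz))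
  simpa using hvol ((hvolC.symm.trans h).trans (map_zero vol).symm)

/-- The bilinear form `(η, w) ↦ vol(x ∧ η ∧ w)` on the whole exterior algebra; its restriction to
`⋀³V₅ × ⋀²V₅` is the pairing through which `AWq` is defined. -/
def wedgePairing {n : ℕ} (vol : ⋀[ℂ]^n V →ₗ[ℂ] ℂ) (x : V) :
    ExteriorAlgebra ℂ V →ₗ[ℂ] ExteriorAlgebra ℂ V →ₗ[ℂ] ℂ :=
  (LinearMap.mul ℂ (ExteriorAlgebra ℂ V) ∘ₗ LinearMap.mulLeft ℂ (ι ℂ x)).compr₂ (volC V n vol)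

lemma wedgePairing_apply {n : ℕ} (vol : ⋀[ℂ]^n V →ₗ[ℂ] ℂ) (x : V) (a b : ExteriorAlgebra ℂ V) :
    wedgePairing vol x a b = volC V n vol (ι ℂ x * a * b) :=
  rfl

lemma mul_eq_zero_of_wedgePairing_eq_zero {n k j : ℕ} {vol : ⋀[ℂ]^n V →ₗ[ℂ] ℂ}
    (hvol : Function.Injective vol) (hn : k + 1 + j = n) (hx : x ∉ V₅)
    {η w : ExteriorAlgebra ℂ V} (hη : η ∈ extPow V V₅ k) (hw : w ∈ extPow V V₅ j)
    (h : wedgePairing vol x η w = 0) : η * w = 0 := by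
  obtain ⟨ξ, hξx, hξ⟩ := exists_dual_eq_one_of_notMem hx
  have hdeg : ι ℂ x * η * w ∈ ⋀[ℂ]^n V := by
    subst hn
    exact SetLike.mul_mem_graded (ι_mul_mem_exteriorPower x (extPow_le_exteriorPower V₅ k hη))
      (extPow_le_exteriorPower V₅ j hw)
  have hxηw : ι ℂ x * (η * w) = 0 := by
    rw [← mul_assoc]
    exact eq_zero_of_volC_eq_zero hvol hdeg h
  have hηw : η * w ∈ V₅.map (ι ℂ) ^ (k + j) := SetLike.mul_mem_graded hη hw
  rw [← zero_add (ι ℂ x * _)] at hxηw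
  exact ((add_ι_mul_eq_zero_iff hξx (map_zero _) (contract_eq_zero hξ hηw)).1 hxηw).2

lemma eq_zero_of_forall_wedgePairing_eq_zero {n k j : ℕ} {vol : ⋀[ℂ]^n V →ₗ[ℂ] ℂ}
    (hvol : Function.Injective vol) (hn : k + 1 + j = n) (hx : x ∉ V₅)
    (hkj : k + j ≤ finrank ℂ V₅) {η : ExteriorAlgebra ℂ V} (hη : η ∈ extPow V V₅ k)
    (h : ∀ w ∈ extPow V V₅ j, wedgePairing vol x η w = 0) : η = 0 :=
  eq_zero_of_forall_mul_eq_zero hkj hη fun w hw =>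
    mul_eq_zero_of_wedgePairing_eq_zero hvol hn hx hη hw (h w hw)

lemma finrank_extPow [FiniteDimensional ℂ V₅] (k : ℕ) :
    finrank ℂ (extPow V V₅ k) = (finrank ℂ V₅).choose k :=
  finrank_map_ι_pow k

instance finiteDimensional_extPow [FiniteDimensional ℂ V₅] (k : ℕ) :
    FiniteDimensional ℂ (extPow V V₅ k) :=
  Module.Finite.iff_fg.2 (((Module.Finite.iff_fg.1 ‹_›).map _).pow k)

lemma wedgePairing_domRestrict₁₂_surjective {n k j : ℕ} {vol : ⋀[ℂ]^n V →ₗ[ℂ] ℂ}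
    [FiniteDimensional ℂ V₅] (hvol : Function.Injective vol) (hn : k + 1 + j = n) (hx : x ∉ V₅)
    (hkj : k + j = finrank ℂ V₅) {R : Submodule ℂ (ExteriorAlgebra ℂ V)}
    (hR : R ≤ extPow V V₅ j) :
    Function.Surjective ((wedgePairing vol x).domRestrict₁₂ (extPow V V₅ k) R) :=
  domRestrict₁₂_surjective
    (by rw [finrank_extPow, finrank_extPow, Nat.choose_symm_of_eq_add hkj.symm])
    (fun _ hη h => eq_zero_of_forall_wedgePairing_eq_zero hvol hn hx hkj.le hη h) hR

lemma finrank_ker_wedgePairing_domRestrict₁₂ {n k j : ℕ} {vol : ⋀[ℂ]^n V →ₗ[ℂ] ℂ}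
    [FiniteDimensional ℂ V₅] (hvol : Function.Injective vol) (hn : k + 1 + j = n) (hx : x ∉ V₅)
    (hkj : k + j = finrank ℂ V₅) {R : Submodule ℂ (ExteriorAlgebra ℂ V)}
    (hR : R ≤ extPow V V₅ j) :
    finrank ℂ (LinearMap.ker ((wedgePairing vol x).domRestrict₁₂ (extPow V V₅ k) R)) +
      finrank ℂ R = (finrank ℂ V₅).choose k := by
  have : FiniteDimensional ℂ R := Submodule.finiteDimensional_of_le hR
  rw [← finrank_extPow, ← LinearMap.finrank_range_add_finrank_ker
    ((wedgePairing vol x).domRestrict₁₂ (extPow V V₅ k) R),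
    LinearMap.range_eq_top.2 (wedgePairing_domRestrict₁₂_surjective hvol hn hx hkj hR),
    finrank_top, Subspace.dual_finrank_eq, add_comm]

lemma vWedge_le_extPow_two (hv : v ∈ V₅) : vWedge V v V₅ ≤ extPow V V₅ 2 := by
  rintro _ ⟨_, hu, rfl⟩
  exact ι_mul_mem hv ((pow_one (V₅.map (ι ℂ))).ge hu)

lemma forall_mem_vWedge_wedgePairing_eq_zero_iff {n k : ℕ} {vol : ⋀[ℂ]^n V →ₗ[ℂ] ℂ}
    (hvol : Function.Injective vol) (hn : k + 1 + 2 = n) (hx : x ∉ V₅)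
    (hk : k + 2 ≤ finrank ℂ V₅) (hv : v ∈ V₅) {η : ExteriorAlgebra ℂ V}
    (hη : η ∈ extPow V V₅ k) :
    (∀ u ∈ vWedge V v V₅, wedgePairing vol x η u = 0) ↔ ι ℂ v * η = 0 := by
  rw [← mul_ι_eq_zero_iff]
  constructor
  · intro h
    have hηv : η * ι ℂ v ∈ V₅.map (ι ℂ) ^ (k + 1) := by
      rw [pow_succ]
      exact Submodule.mul_mem_mul hη ⟨v, hv, rfl⟩
    refine eq_zero_of_forall_mul_eq_zero (j := 1) hk hηv fun u hu => ?_
    have hvu : ι ℂ v * u ∈ vWedge V v V₅ := ⟨u, (pow_one (V₅.map (ι ℂ))).le hu, rfl⟩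
    rw [mul_assoc]
    exact mul_eq_zero_of_wedgePairing_eq_zero hvol hn hx hη (vWedge_le_extPow_two hv hvu)
      (h _ hvu)
  · rintro h _ ⟨u, -, rfl⟩
    rw [wedgePairing_apply, LinearMap.mulLeft_apply, mul_assoc, ← mul_assoc η, h, zero_mul,
      mul_zero, map_zero]

lemma mem_Fv_iff (hv0 : v ≠ 0) {z : ExteriorAlgebra ℂ V} (hz : z ∈ ⋀[ℂ]^3 V) :
    z ∈ Fv V v ↔ ι ℂ v * z = 0 := by
  unfold Fv
  rw [exteriorPower, ← Submodule.map_top] at hz ⊢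
  exact (ι_mul_eq_zero_iff_mem_map hv0 hz).symm

lemma mem_vWedge_iff (hv0 : v ≠ 0) {w : ExteriorAlgebra ℂ V} (hw : w ∈ extPow V V₅ 2) :
    w ∈ vWedge V v V₅ ↔ ι ℂ v * w = 0 := by
  rw [ι_mul_eq_zero_iff_mem_map hv0 hw, pow_one, vWedge]

lemma add_ι_mul_mem_Fv_iff (hx : x ∉ V₅) (hv : v ∈ V₅) (hv0 : v ≠ 0)
    {η w : ExteriorAlgebra ℂ V} (hη : η ∈ extPow V V₅ 3) (hw : w ∈ extPow V V₅ 2) :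
    η + ι ℂ x * w ∈ Fv V v ↔ ι ℂ v * η = 0 ∧ w ∈ vWedge V v V₅ := by
  obtain ⟨ξ, hξx, hξ⟩ := exists_dual_eq_one_of_notMem hx
  have hdeg : η + ι ℂ x * w ∈ ⋀[ℂ]^3 V :=
    add_mem (extPow_le_exteriorPower V₅ 3 hη)
      (ι_mul_mem_exteriorPower x (extPow_le_exteriorPower V₅ 2 hw))
  have hvη := contract_eq_zero hξ (ι_mul_mem hv hη)
  have hvw := contract_eq_zero hξ (neg_mem (ι_mul_mem hv hw))
  rw [mem_Fv_iff hv0 hdeg, mul_add, ι_mul_ι_mul_swap, ← mul_neg,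
    add_ι_mul_eq_zero_iff hξx hvη hvw, neg_eq_zero, mem_vWedge_iff hv0 hw]

variable {vol : ⋀[ℂ]^6 V →ₗ[ℂ] ℂ} {W : Submodule ℂ (ExteriorAlgebra ℂ V)}
  {q : W →ₗ[ℂ] W →ₗ[ℂ] ℂ}

lemma finiteDimensional_AWq [FiniteDimensional ℂ V₅] (hW : W ≤ extPow V V₅ 2) :
    FiniteDimensional ℂ (AWq V vol x V₅ W q) := by
  refine Submodule.finiteDimensional_of_le
    (S₂ := extPow V V₅ 3 ⊔ (extPow V V₅ 2).map (LinearMap.mulLeft ℂ (ι ℂ x))) ?_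
  rintro _ ⟨w, η, hη, rfl, -⟩
  exact add_mem (Submodule.mem_sup_left hη) (Submodule.mem_sup_right ⟨w, hW w.2, rfl⟩)

lemma mem_AWq_inf_Fv_iff (hvol : Function.Injective vol) (hV₅ : finrank ℂ V₅ = 5) (hx : x ∉ V₅)
    (hW : W ≤ extPow V V₅ 2) (hv : v ∈ V₅) (hv0 : v ≠ 0) {z : ExteriorAlgebra ℂ V} :
    z ∈ AWq V vol x V₅ W q ⊓ Fv V v ↔
      ∃ w : W, ↑w ∈ vWedge V v V₅ ∧ ∃ η ∈ extPow V V₅ 3, z = η + ι ℂ x * w ∧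
        (∀ u ∈ vWedge V v V₅, wedgePairing vol x η u = 0) ∧
        ∀ w' : W, wedgePairing vol x η w' = -q w w' := by
  constructor
  · rintro ⟨⟨w, η, hη, rfl, hq⟩, hF⟩
    obtain ⟨hvη, hw⟩ := (add_ι_mul_mem_Fv_iff hx hv hv0 hη (hW w.2)).1 hF
    exact ⟨w, hw, η, hη, rfl,
      (forall_mem_vWedge_wedgePairing_eq_zero_iff hvol rfl hx hV₅.ge hv hη).2 hvη, hq⟩
  · rintro ⟨w, hw, η, hη, rfl, hvη, hq⟩
    exact ⟨⟨w, η, hη, rfl, hq⟩, (add_ι_mul_mem_Fv_iff hx hv hv0 hη (hW w.2)).2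
      ⟨(forall_mem_vWedge_wedgePairing_eq_zero_iff hvol rfl hx hV₅.ge hv hη).1 hvη, hw⟩⟩

/-- The subspace `W ∩ (v ∧ V₅)`, as a subspace of `W` so that `q` can be restricted to it. -/
def vWedgeIn (W : Submodule ℂ (ExteriorAlgebra ℂ V)) (v : V) (V₅ : Submodule ℂ V) :
    Submodule ℂ W :=
  (vWedge V v V₅).comap W.subtype

lemma finrank_vWedgeIn : finrank ℂ (vWedgeIn W v V₅) =
    finrank ℂ (W ⊓ vWedge V v V₅ : Submodule ℂ (ExteriorAlgebra ℂ V)) := by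
  rw [← Submodule.map_comap_subtype, Submodule.finrank_map_subtype_eq, vWedgeIn]

/-- The radical of the restriction of `q` to `W ∩ (v ∧ V₅)`. -/
def vWedgeRadical (q : W →ₗ[ℂ] W →ₗ[ℂ] ℂ) (v : V) (V₅ : Submodule ℂ V) :
    Submodule ℂ (vWedgeIn W v V₅) :=
  LinearMap.ker (q.domRestrict₁₂ (vWedgeIn W v V₅) (vWedgeIn W v V₅))

lemma map_contract_AWq_inf_Fv_eq {ξ : Dual ℂ V} (hξx : ξ x = 1) (hξ : ∀ u ∈ V₅, ξ u = 0)
    (hvol : Function.Injective vol) (hV₅ : finrank ℂ V₅ = 5) (hW : W ≤ extPow V V₅ 2)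
    (hv : v ∈ V₅) (hv0 : v ≠ 0) :
    (AWq V vol x V₅ W q ⊓ Fv V v).map (contract ξ) =
      (vWedgeRadical q v V₅).map (W.subtype ∘ₗ (vWedgeIn W v V₅).subtype) := by
  have hx : x ∉ V₅ := fun hx => one_ne_zero (hξx.symm.trans (hξ x hx))
  have : FiniteDimensional ℂ V₅ := .of_finrank_pos (by lia)
  have hcontract {η : ExteriorAlgebra ℂ V} (hη : η ∈ extPow V V₅ 3) (w : W) :
      contract ξ (η + ι ℂ x * w) = w :=
    contract_add_ι_mul hξx (contract_eq_zero hξ hη) (contract_eq_zero hξ (hW w.2))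
  apply le_antisymm
  · rintro _ ⟨z, hz, rfl⟩
    obtain ⟨w, hw, η, hη, rfl, hvη, hq⟩ := (mem_AWq_inf_Fv_iff hvol hV₅ hx hW hv hv0).1 hz
    refine ⟨⟨w, hw⟩, LinearMap.ext fun b => ?_, (hcontract hη w).symm⟩
    exact neg_eq_zero.1 ((hq b).symm.trans (hvη b b.2))
  · rintro _ ⟨w, hw, rfl⟩
    obtain ⟨g, hgq, hg⟩ := exists_dual_eq_on_and_eq_zero_on (U := vWedge V v V₅) (-q w)
      fun b hb => neg_eq_zero.2 (LinearMap.congr_fun hw ⟨b, hb⟩)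
    obtain ⟨⟨η, hη⟩, hηg⟩ := wedgePairing_domRestrict₁₂_surjective hvol rfl hx hV₅.symm
      (sup_le hW (vWedge_le_extPow_two hv)) (g ∘ₗ Submodule.subtype _)
    have hpair {y : ExteriorAlgebra ℂ V} (hy : y ∈ W ⊔ vWedge V v V₅) :
        wedgePairing vol x η y = g y := LinearMap.congr_fun hηg ⟨y, hy⟩
    refine ⟨η + ι ℂ x * w, (mem_AWq_inf_Fv_iff hvol hV₅ hx hW hv hv0).2
      ⟨w, w.2, η, hη, rfl, fun u hu => ?_, fun w' => ?_⟩, hcontract hη w⟩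
    · rw [hpair (Submodule.mem_sup_right hu), hg u hu]
    · rw [hpair (Submodule.mem_sup_left w'.2), hgq w', LinearMap.neg_apply]

lemma AWq_inf_Fv_inf_ker_contract_eq {ξ : Dual ℂ V} (hξx : ξ x = 1) (hξ : ∀ u ∈ V₅, ξ u = 0)
    (hvol : Function.Injective vol) (hV₅ : finrank ℂ V₅ = 5) (hW : W ≤ extPow V V₅ 2)
    (hv : v ∈ V₅) (hv0 : v ≠ 0) :
    AWq V vol x V₅ W q ⊓ Fv V v ⊓ LinearMap.ker (contract ξ) =
      (LinearMap.ker ((wedgePairing vol x).domRestrict₁₂ (extPow V V₅ 3)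
        (W ⊔ vWedge V v V₅))).map (extPow V V₅ 3).subtype := by
  have hx : x ∉ V₅ := fun hx => one_ne_zero (hξx.symm.trans (hξ x hx))
  ext z
  constructor
  · rintro ⟨hz, hzξ⟩
    obtain ⟨w, -, η, hη, rfl, hvη, hq⟩ := (mem_AWq_inf_Fv_iff hvol hV₅ hx hW hv hv0).1 hz
    have hw0 : w = 0 := Subtype.ext <|
      (contract_add_ι_mul hξx (contract_eq_zero hξ hη) (contract_eq_zero hξ (hW w.2))).symm.trans
        hzξ
    refine ⟨⟨η, hη⟩, LinearMap.ext fun y => ?_, by simp [hw0]⟩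
    have hle : W ⊔ vWedge V v V₅ ≤ LinearMap.ker (wedgePairing vol x η) :=
      sup_le (fun w' hw' => by simpa [hw0] using hq ⟨w', hw'⟩) hvη
    exact hle y.2
  · rintro ⟨⟨η, hη⟩, hker, rfl⟩
    have hpair {y : ExteriorAlgebra ℂ V} (hy : y ∈ W ⊔ vWedge V v V₅) :
        wedgePairing vol x η y = 0 := LinearMap.congr_fun hker ⟨y, hy⟩
    refine ⟨(mem_AWq_inf_Fv_iff hvol hV₅ hx hW hv hv0).2 ⟨0, zero_mem _, η, hη, by simp,
      fun u hu => hpair (Submodule.mem_sup_right hu), fun w' => ?_⟩, contract_eq_zero hξ hη⟩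
    rw [hpair (Submodule.mem_sup_left w'.2), map_zero, LinearMap.zero_apply, neg_zero]

theorem finrank_AWq_inf_Fv (hvol : Function.Injective vol)
    (hV₅ : finrank ℂ V₅ = 5) (hx : x ∉ V₅) (hW : W ≤ extPow V V₅ 2) (hv : v ∈ V₅) (hv0 : v ≠ 0) :
    finrank ℂ (AWq V vol x V₅ W q ⊓ Fv V v : Submodule ℂ (ExteriorAlgebra ℂ V)) +
        finrank ℂ W =
      6 + finrank ℂ (W ⊓ vWedge V v V₅ : Submodule ℂ (ExteriorAlgebra ℂ V)) +
        finrank ℂ (vWedgeRadical q v V₅) := by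
  obtain ⟨ξ, hξx, hξ⟩ := exists_dual_eq_one_of_notMem hx
  have : FiniteDimensional ℂ V₅ := .of_finrank_pos (by lia)
  have : FiniteDimensional ℂ W := Submodule.finiteDimensional_of_le hW
  have : FiniteDimensional ℂ (AWq V vol x V₅ W q ⊓ Fv V v :) :=
    have := finiteDimensional_AWq (vol := vol) (x := x) (q := q) hW
    Submodule.finiteDimensional_inf_left _ _
  have : FiniteDimensional ℂ (vWedge V v V₅) :=
    Submodule.finiteDimensional_of_le (vWedge_le_extPow_two hv)
  have hrank := finrank_map_add_finrank_inf_ker (contract ξ) (AWq V vol x V₅ W q ⊓ Fv V v)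
  have hinj : Function.Injective (W.subtype ∘ₗ (vWedgeIn W v V₅).subtype) :=
    W.injective_subtype.comp (vWedgeIn W v V₅).injective_subtype
  rw [map_contract_AWq_inf_Fv_eq hξx hξ hvol hV₅ hW hv hv0,
    ← (Submodule.equivMapOfInjective _ hinj _).finrank_eq,
    AWq_inf_Fv_inf_ker_contract_eq hξx hξ hvol hV₅ hW hv hv0,
    Submodule.finrank_map_subtype_eq] at hrank
  have hker := finrank_ker_wedgePairing_domRestrict₁₂ (vol := vol) hvol rfl hx hV₅.symm
    (sup_le hW (vWedge_le_extPow_two hv))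
  have hsup := Submodule.finrank_sup_add_finrank_inf_eq W (vWedge V v V₅)
  have hvWedge : finrank ℂ (vWedge V v V₅) + 1 = finrank ℂ V₅ :=
    finrank_map_mulLeft_ι_add_one hv hv0
  rw [hV₅] at hker hvWedge
  have hchoose : Nat.choose 5 3 = 10 := rfl
  lia

lemma finrank_vWedgeRadical_le [FiniteDimensional ℂ W] : finrank ℂ (vWedgeRadical q v V₅) ≤
    finrank ℂ (W ⊓ vWedge V v V₅ : Submodule ℂ (ExteriorAlgebra ℂ V)) := by
  rw [← finrank_vWedgeIn]
  exact Submodule.finrank_le _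

lemma finrank_vWedgeRadical_eq_iff [FiniteDimensional ℂ W] :
    finrank ℂ (vWedgeRadical q v V₅) =
      finrank ℂ (W ⊓ vWedge V v V₅ : Submodule ℂ (ExteriorAlgebra ℂ V)) ↔
    ∀ a b : W, ↑a ∈ vWedge V v V₅ → ↑b ∈ vWedge V v V₅ → q a b = 0 := by
  rw [← finrank_vWedgeIn, vWedgeRadical]
  exact (finrank_ker_domRestrict₁₂_self_eq_iff q (vWedgeIn W v V₅)).trans
    ⟨fun h a b ha hb => h a ha b hb, fun h a ha b hb => h a b ha hb⟩

end AWq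
end EPW

theorem stmt9_general {V : Type} [AddCommGroup V] [Module ℂ V] {vol : ⋀[ℂ]^6 V →ₗ[ℂ] ℂ}
    (hvol : Function.Injective vol) {V₅ : Submodule ℂ V} (hV₅ : finrank ℂ V₅ = 5)
    {x : V} (hx : x ∉ V₅) {W : Submodule ℂ (ExteriorAlgebra ℂ V)} (hW : W ≤ EPW.extPow V V₅ 2)
    (q : W →ₗ[ℂ] W →ₗ[ℂ] ℂ) {v : V} (hv : v ∈ V₅) (hv0 : v ≠ 0) {m : ℕ}
    (hm : finrank ℂ (W ⊓ EPW.vWedge V v V₅ : Submodule ℂ (ExteriorAlgebra ℂ V)) ≤ m) :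
    (6 + 2 * m ≤ finrank ℂ (EPW.AWq V vol x V₅ W q ⊓ EPW.Fv V v :
          Submodule ℂ (ExteriorAlgebra ℂ V)) + finrank ℂ W ↔
        finrank ℂ (W ⊓ EPW.vWedge V v V₅ : Submodule ℂ (ExteriorAlgebra ℂ V)) = m ∧
          ∀ a b : W, (a : ExteriorAlgebra ℂ V) ∈ EPW.vWedge V v V₅ →
            (b : ExteriorAlgebra ℂ V) ∈ EPW.vWedge V v V₅ → q a b = 0) ∧
      ((finrank ℂ (W ⊓ EPW.vWedge V v V₅ : Submodule ℂ (ExteriorAlgebra ℂ V)) = m ∧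
          ∀ a b : W, (a : ExteriorAlgebra ℂ V) ∈ EPW.vWedge V v V₅ →
            (b : ExteriorAlgebra ℂ V) ∈ EPW.vWedge V v V₅ → q a b = 0) →
        finrank ℂ (EPW.AWq V vol x V₅ W q ⊓ EPW.Fv V v : Submodule ℂ (ExteriorAlgebra ℂ V)) +
          finrank ℂ W = 6 + 2 * m) := by
  have : FiniteDimensional ℂ V₅ := .of_finrank_pos (by lia)
  have : FiniteDimensional ℂ W := Submodule.finiteDimensional_of_le hW
  have hle := EPW.finrank_vWedgeRadical_le (q := q) (v := v) (V₅ := V₅)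
  rw [← EPW.finrank_vWedgeRadical_eq_iff, EPW.finrank_AWq_inf_Fv hvol hV₅ hx hW hv hv0]
  lia

theorem stmt9 (V : Type) [AddCommGroup V] [Module ℂ V]
    (hdim : finrank ℂ V = 6)
    (vol : ⋀[ℂ]^6 V →ₗ[ℂ] ℂ) (hvol : Function.Bijective vol)
    (V₅ : Submodule ℂ V) (hV₅ : finrank ℂ V₅ = 5)
    (x : V) (hx : x ∉ V₅)
    (W : Submodule ℂ (ExteriorAlgebra ℂ V)) (hW : W ≤ EPW.extPow V V₅ 2)
    (q : W →ₗ[ℂ] W →ₗ[ℂ] ℂ) (hq : ∀ a b : W, q a b = q b a)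
    (hW7 : finrank ℂ W = 7)
    (hWv : ∀ v ∈ V₅, v ≠ 0 →
      finrank ℂ (W ⊓ EPW.vWedge V v V₅ : Submodule ℂ (ExteriorAlgebra ℂ V)) ≤ 2) :
    ∀ v ∈ V₅, v ≠ 0 →
      ((3 ≤ finrank ℂ (EPW.AWq V vol x V₅ W q ⊓ EPW.Fv V v : Submodule ℂ (ExteriorAlgebra ℂ V))
        ↔ (finrank ℂ (W ⊓ EPW.vWedge V v V₅ : Submodule ℂ (ExteriorAlgebra ℂ V)) = 2 ∧
           ∀ a b : W, (a : ExteriorAlgebra ℂ V) ∈ EPW.vWedge V v V₅ →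
             (b : ExteriorAlgebra ℂ V) ∈ EPW.vWedge V v V₅ → q a b = 0)) ∧
      ((finrank ℂ (W ⊓ EPW.vWedge V v V₅ : Submodule ℂ (ExteriorAlgebra ℂ V)) = 2 ∧
           ∀ a b : W, (a : ExteriorAlgebra ℂ V) ∈ EPW.vWedge V v V₅ →
             (b : ExteriorAlgebra ℂ V) ∈ EPW.vWedge V v V₅ → q a b = 0) →
        finrank ℂ (EPW.AWq V vol x V₅ W q ⊓ EPW.Fv V v : Submodule ℂ (ExteriorAlgebra ℂ V))
          = 3)) := by
  intro v hv hv0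
  simpa [hW7] using stmt9_general hvol.injective hV₅ hx hW q hv hv0 (hWv v hv hv0)
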